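/- Let $B$ be a unital complex Banach algebra. A $B$-valued Banach noncommutative probability space is a pair $(A,E)$ where $A$ is a unital complex Banach algebra containing an isometrically embedded copy of $B$ as a unital subalgebra and $E:A\to B$ is a bounded linear projection onto $B$ with $E(b_1ab_2)=b_1E(a)b_2$ for all $a\in A$, $b_1,b_2\in B$. For $a\in A$ and $k\ge 1$ let $\mu_{a,k}(b_1,\dots,b_k)=E(b_1ab_2a\cdots b_ka)$ be the $k$th moment function of $a$, and let $\Psi_a(b)=E((1-ba)^{-1})-1$ for $b\in B$ near $0$. If $E(a)$ is invertible in $B$, then $\Psi_a$ has a local compositional inverse $\Psi_a^{\langle -1\rangle}$ analytic near $0$, there is a unique analytic germ $H_a$ at $0$ with $\Psi_a^{\langle -1\rangle}(b)=bH_a(b)$, and the S-transform of $a$ is $S_a(b)=(1+b)H_a(b)$. For an analytic $B$-valued function $F$ near $0\in B$, write $F(b)=F_0+\sum_{n\ge1}F_n(b,\dots,b)$ for its power series expansion about $0$, with $F_n$ symmetric bounded $n$-multilinear maps ($F_n$ is $1/n!$ times the $n$-fold Fréchet derivative of $F$ at $0$). Let $(A,E)$ and $(A',E')$ be $B$-valued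 Banach noncommutative probability spaces, and let $a\in A$ and $a'\in A'$ with $E(a)$ and $E'(a')$ invertible in $B$. Fix $n\ge 0$. If $\mu_{a,k}=\mu_{a',k}$ for all $k=1,\dots,n+1$, then the $n$th terms of the power series expansions about $0$ of the S-transforms coincide: $(S_a)_n(b,\dots,b)=(S_{a'})_n(b,\dots,b)$ for all $b\in B$. -/

import Mathlib

open scoped Topology
open Filter

noncomputable section

/-- A `B`-valued Banach noncommutative probability space structure on the unital Banach algebra
`A`: a unital isometric embedding `ι` of `B` in `A`, and a bounded linear map `E : A → B` with
`E b = b` on `B` and `E (b₁ a b₂) = b₁ (E a) b₂`. -/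
structure BanachNCPS (B A : Type*) [NormedRing B] [NormedAlgebra ℂ B]
    [NormedRing A] [NormedAlgebra ℂ A] where
  ι : B →ₐ[ℂ] A
  isometry : Isometry ι
  E : A →L[ℂ] B
  E_ι : ∀ b : B, E (ι b) = b
  cond_exp : ∀ (a : A) (b₁ b₂ : B), E (ι b₁ * a * ι b₂) = b₁ * E a * b₂

namespace BanachNCPS

variable {B A : Type*} [NormedRing B] [NormedAlgebra ℂ B] [NormedRing A] [NormedAlgebra ℂ A]

/-- The `k`-th moment function `μ_{a,k}(b₁,…,b_k) = E(b₁ a b₂ a ⋯ b_k a)`. -/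
def moment (P : BanachNCPS B A) (a : A) (k : ℕ) (b : Fin k → B) : B :=
  P.E (List.ofFn fun j => P.ι (b j) * a).prod

/-- `Ψ_a(b) = E((1 - ba)⁻¹) - 1`. Only the values for `b` near `0`, where `1 - ba` is invertible,
are relevant; elsewhere `Ring.inverse` is a default value. -/
def Psi (P : BanachNCPS B A) (a : A) (b : B) : B :=
  P.E (Ring.inverse (1 - P.ι b * a)) - 1

/-- `G` is, near `0`, an analytic compositional inverse of `F` (where `F 0 = 0`). -/
structure IsLocalInverse (F G : B → B) : Prop where
  analyticAt : AnalyticAt ℂ G 0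
  map_zero : G 0 = 0
  right_inv : ∀ᶠ b in 𝓝 (0 : B), F (G b) = b
  left_inv : ∀ᶠ b in 𝓝 (0 : B), G (F b) = b

theorem isLocalInverse_unique {F G G' : B → B}
    (h : IsLocalInverse F G) (h' : IsLocalInverse F G') : G =ᶠ[𝓝 0] G' := by
  have ht : Tendsto G' (𝓝 0) (𝓝 0) := by
    have := h'.analyticAt.continuousAt.tendsto
    rwa [h'.map_zero] at this
  filter_upwards [h'.right_inv, ht.eventually h.left_inv] with b h1 h2
  rw [h1] at h2
  exact h2

/-- The auxiliary function `Φ_a(b) = E(a (1 - ba)⁻¹)`, which satisfies `Ψ_a(b) = b Φ_a(b)`. -/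
def Phi (P : BanachNCPS B A) (a : A) (b : B) : B :=
  P.E (a * Ring.inverse (1 - P.ι b * a))

theorem analyticAt_ι (P : BanachNCPS B A) (x : B) : AnalyticAt ℂ P.ι x :=
  (⟨P.ι.toLinearMap, P.isometry.continuous⟩ : B →L[ℂ] A).analyticAt x

theorem Phi_zero (P : BanachNCPS B A) (a : A) : P.Phi a 0 = P.E a := by simp [Phi]

theorem Psi_zero (P : BanachNCPS B A) (a : A) : P.Psi a 0 = 0 := by
  have : P.E 1 = 1 := by simpa using P.E_ι 1
  simp [Psi, this]

variable [CompleteSpace A]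

theorem analyticAt_inverse_one_sub (P : BanachNCPS B A) (a : A) :
    AnalyticAt ℂ (fun b : B => Ring.inverse (1 - P.ι b * a)) 0 := by
  have h1 : AnalyticAt ℂ (fun b : B => 1 - P.ι b * a) 0 :=
    analyticAt_const.sub ((P.analyticAt_ι 0).mul analyticAt_const)
  have h2 : AnalyticAt ℂ (Ring.inverse : A → A) (1 - P.ι (0 : B) * a) := by
    have := analyticAt_inverse (𝕜 := ℂ) (1 : Aˣ)
    simpa using this
  exact h2.comp_of_eq h1 rfl

theorem analyticAt_Psi (P : BanachNCPS B A) (a : A) : AnalyticAt ℂ (P.Psi a) 0 :=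
  ((P.E.analyticAt _).comp (P.analyticAt_inverse_one_sub a)).sub analyticAt_const

theorem analyticAt_Phi (P : BanachNCPS B A) (a : A) : AnalyticAt ℂ (P.Phi a) 0 :=
  (P.E.analyticAt _).comp (analyticAt_const.mul (P.analyticAt_inverse_one_sub a))

theorem Psi_eq_mul_Phi (P : BanachNCPS B A) (a : A) :
    ∀ᶠ b in 𝓝 (0 : B), P.Psi a b = b * P.Phi a b := by
  have h1 : ContinuousAt (fun b : B => 1 - P.ι b * a) 0 :=
    (analyticAt_const.sub ((P.analyticAt_ι 0).mul analyticAt_const)).continuousAt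
  have h2 : ∀ᶠ b in 𝓝 (0 : B), IsUnit (1 - P.ι b * a) :=
    h1.eventually (Units.isOpen.mem_nhds (by simp))
  filter_upwards [h2] with b hb
  have h3 : P.E (P.ι b * (a * Ring.inverse (1 - P.ι b * a))) = b * P.Phi a b := by
    have := P.cond_exp (a * Ring.inverse (1 - P.ι b * a)) b 1
    simpa [Phi] using this
  have hE : P.E 1 = 1 := by simpa using P.E_ι 1
  have h4 : Ring.inverse (1 - P.ι b * a) - 1 = P.ι b * (a * Ring.inverse (1 - P.ι b * a)) := by
    have := Ring.mul_inverse_cancel _ hb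
    rw [sub_mul, one_mul] at this
    rw [← mul_assoc, sub_eq_iff_eq_add, add_comm, ← sub_eq_iff_eq_add]
    exact this
  rw [← h3, ← h4, map_sub, hE, Psi]

variable [CompleteSpace B]

theorem exists_isLocalInverse_Psi (P : BanachNCPS B A) (a : A) (ha : IsUnit (P.E a)) :
    ∃ G : B → B, IsLocalInverse (P.Psi a) G := by
  obtain ⟨u, hu⟩ := ha
  let e : B ≃L[ℂ] B := ContinuousLinearEquiv.equivOfInverse
    ((ContinuousLinearMap.mul ℂ B).flip (u : B))
    ((ContinuousLinearMap.mul ℂ B).flip ((u⁻¹ : Bˣ) : B))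
    (fun x => by simp) (fun x => by simp)
  have hd : HasFDerivAt (P.Psi a) (e : B →L[ℂ] B) 0 := by
    have h := (hasFDerivAt_id (𝕜 := ℂ) (0 : B)).mul'
      (P.analyticAt_Phi a).differentiableAt.hasFDerivAt
    have h' := h.congr_of_eventuallyEq (P.Psi_eq_mul_Phi a)
    have he : (e : B →L[ℂ] B) = (id (0 : B)) • fderiv ℂ (P.Phi a) 0 +
        MulOpposite.op (P.Phi a 0) • ContinuousLinearMap.id ℂ B := by
      ext x
      simp [e, Phi_zero, hu]
    rw [he]
    exact h'
  have hc : ContDiffAt ℂ ⊤ (P.Psi a) 0 := (P.analyticAt_Psi a).contDiffAt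
  have hs := hc.hasStrictFDerivAt' hd (by simp)
  have h0 := P.Psi_zero a
  refine ⟨hc.localInverse hd (by simp), ?_, ?_, ?_, ?_⟩
  · have := hc.to_localInverse hd (by simp)
    rw [h0] at this
    exact this.analyticAt
  · have := hc.localInverse_apply_image hd (by simp)
    rwa [h0] at this
  · have := hs.eventually_right_inverse
    rwa [h0] at this
  · exact hs.eventually_left_inverse

/-- The local compositional inverse `Ψ_a^{⟨-1⟩}`; its germ at `0` is unique
(`isLocalInverse_unique`). -/
def PsiInv (P : BanachNCPS B A) (a : A) (ha : IsUnit (P.E a)) : B → B :=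
  (P.exists_isLocalInverse_Psi a ha).choose

theorem isLocalInverse_PsiInv (P : BanachNCPS B A) (a : A) (ha : IsUnit (P.E a)) :
    IsLocalInverse (P.Psi a) (P.PsiInv a ha) :=
  (P.exists_isLocalInverse_Psi a ha).choose_spec

theorem exists_H (P : BanachNCPS B A) (a : A) (ha : IsUnit (P.E a)) :
    ∃ H : B → B, AnalyticAt ℂ H 0 ∧ ∀ᶠ b in 𝓝 (0 : B), P.PsiInv a ha b = b * H b := by
  have hG := P.isLocalInverse_PsiInv a ha
  have hG0 := hG.map_zero
  have hT : Tendsto (P.PsiInv a ha) (𝓝 0) (𝓝 0) := by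
    have := hG.analyticAt.continuousAt.tendsto
    rwa [hG0] at this
  have hPG : AnalyticAt ℂ (fun b => P.Phi a (P.PsiInv a ha b)) 0 :=
    (P.analyticAt_Phi a).comp_of_eq hG.analyticAt hG0
  have hPG0 : P.Phi a (P.PsiInv a ha 0) = P.E a := by rw [hG0, Phi_zero]
  refine ⟨fun b => Ring.inverse (P.Phi a (P.PsiInv a ha b)), ?_, ?_⟩
  · have h2 : AnalyticAt ℂ (Ring.inverse : B → B) (P.E a) := by
      have := analyticAt_inverse (𝕜 := ℂ) ha.unit
      simpa using this
    exact h2.comp_of_eq hPG hPG0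
  · have hU : ∀ᶠ b in 𝓝 (0 : B), IsUnit (P.Phi a (P.PsiInv a ha b)) :=
      hPG.continuousAt.eventually (Units.isOpen.mem_nhds (by
        change IsUnit (P.Phi a (P.PsiInv a ha 0))
        rw [hPG0]
        exact ha))
    filter_upwards [hU, hG.right_inv, hT.eventually (P.Psi_eq_mul_Phi a)] with b h1 h2 h3
    rw [h2] at h3
    calc P.PsiInv a ha b
        = P.PsiInv a ha b * P.Phi a (P.PsiInv a ha b)
            * Ring.inverse (P.Phi a (P.PsiInv a ha b)) := by
          rw [mul_assoc, Ring.mul_inverse_cancel _ h1, mul_one]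
      _ = b * Ring.inverse (P.Phi a (P.PsiInv a ha b)) := by rw [← h3]

/-- An analytic germ `H` at `0` is determined by the germ of `b ↦ b H(b)`. -/
theorem H_unique {H H' : B → B} (hH : AnalyticAt ℂ H 0) (hH' : AnalyticAt ℂ H' 0)
    (h : ∀ᶠ b in 𝓝 (0 : B), b * H b = b * H' b) : H =ᶠ[𝓝 0] H' := by
  obtain ⟨r, hr, hball⟩ := Metric.eventually_nhds_iff_ball.1
    (hH.eventually_analyticAt.and (hH'.eventually_analyticAt.and h))
  have ht : ∀ᶠ t : ℂ in 𝓝[≠] 0, t • (1 : B) ∈ Metric.ball (0 : B) r := by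
    have hc : ContinuousAt (fun t : ℂ => t • (1 : B)) 0 := by fun_prop
    exact (hc.eventually (Metric.isOpen_ball.mem_nhds (by simpa using hr))).filter_mono nhdsWithin_le_nhds
  obtain ⟨t, htb, ht0⟩ := (ht.and self_mem_nhdsWithin).exists
  have hu : IsUnit (t • (1 : B)) := by
    rw [← Algebra.algebraMap_eq_smul_one]
    exact (IsUnit.mk0 t ht0).map (algebraMap ℂ B)
  have hev : H =ᶠ[𝓝 (t • (1 : B))] H' := by
    filter_upwards [Units.isOpen.mem_nhds hu, Metric.isOpen_ball.mem_nhds htb] with b hb hb'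
    exact (show IsUnit b from hb).mul_left_cancel (hball b hb').2.2
  have := AnalyticOnNhd.eqOn_of_preconnected_of_eventuallyEq
    (fun b hb => (hball b hb).1) (fun b hb => (hball b hb).2.1)
    (convex_ball (0 : B) r).isPreconnected htb hev
  exact Filter.eventuallyEq_of_mem (Metric.ball_mem_nhds 0 hr) this

/-- The analytic function `H_a` with `Ψ_a^{⟨-1⟩}(b) = b H_a(b)` near `0`; its germ at `0` is unique
(`H_unique`). -/
def H (P : BanachNCPS B A) (a : A) (ha : IsUnit (P.E a)) : B → B :=
  (P.exists_H a ha).choose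

theorem H_spec (P : BanachNCPS B A) (a : A) (ha : IsUnit (P.E a)) :
    AnalyticAt ℂ (P.H a ha) 0 ∧ ∀ᶠ b in 𝓝 (0 : B), P.PsiInv a ha b = b * P.H a ha b :=
  (P.exists_H a ha).choose_spec

/-- The S-transform `S_a(b) = (1 + b) H_a(b)`, as a germ of an analytic function at `0`. -/
def STransform (P : BanachNCPS B A) (a : A) (ha : IsUnit (P.E a)) (b : B) : B :=
  (1 + b) * P.H a ha b

theorem analyticAt_STransform (P : BanachNCPS B A) (a : A) (ha : IsUnit (P.E a)) :
    AnalyticAt ℂ (P.STransform a ha) 0 :=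
  (analyticAt_const.add analyticAt_id).mul (P.H_spec a ha).1

end BanachNCPS

/-- For `F` analytic near `0`, the `n`-th coefficient `F_n` of its power series expansion about `0`:
the symmetric bounded `n`-multilinear map that is `1 / n!` times the `n`-fold Fréchet derivative
of `F` at `0`. The `n`-th term of the expansion is `F_n(b,…,b)`. -/
def powerSeriesCoeff {B : Type*} [NormedRing B] [NormedAlgebra ℂ B] (F : B → B) (n : ℕ) :
    ContinuousMultilinearMap ℂ (fun _ : Fin n => B) B :=
  ((n.factorial : ℂ)⁻¹) • iteratedFDeriv ℂ n F 0

end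

/-!
On a neighbourhood of `0`, `H_a(b) = Φ_a(Ψ_a^{⟨-1⟩}(b))⁻¹`, where `Φ_a(b) = E(a (1 - ba)⁻¹)` and
`Ψ_a(b) = b Φ_a(b)`. By the Neumann series, the moments of order at most `n + 1` determine `Φ_a` up
to an error `O(‖b‖ ^ (n + 1))`. Agreement up to such errors is preserved by products, compositions
and local inversion, so it passes from `Φ_a` to `Ψ_a`, `Ψ_a^{⟨-1⟩}`, `H_a` and `S_a`; and analytic
functions that agree to order `n` have the same `n`-th term.
-/

open Asymptotics

section AgreeToOrder

variable {D E F : Type*} [NormedAddCommGroup D] [NormedAddCommGroup E] [NormedAddCommGroup F]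

/-- Agreement of `f` and `g` to order `n` at `0`, that is, equality of their `n`-jets. It is encoded
by the size of `f - g`, so that no smoothness of `f` or `g` enters the definition. -/
def AgreeToOrder (n : ℕ) (f g : E → F) : Prop :=
  (fun x => f x - g x) =O[𝓝 0] fun x => ‖x‖ ^ (n + 1)

namespace AgreeToOrder

variable {m n : ℕ} {f g h : E → F}

theorem symm (hfg : AgreeToOrder n f g) : AgreeToOrder n g f :=
  IsBigO.symm hfg

theorem trans (hfg : AgreeToOrder n f g) (hgh : AgreeToOrder n g h) : AgreeToOrder n f h :=
  IsBigO.triangle hfg hgh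

theorem of_le (hfg : AgreeToOrder n f g) (hmn : m ≤ n) : AgreeToOrder m f g := by
  rcases hmn.eq_or_lt with rfl | hlt
  · exact hfg
  · exact IsBigO.trans hfg (isLittleO_norm_pow_norm_pow (Nat.succ_lt_succ hlt)).isBigO

theorem congr {f' g' : E → F} (hfg : AgreeToOrder n f g) (hf : f =ᶠ[𝓝 0] f') (hg : g =ᶠ[𝓝 0] g') :
    AgreeToOrder n f' g' :=
  IsBigO.congr' hfg (hf.sub hg) .rfl

theorem tendsto (hfg : AgreeToOrder n f g) {y : F} (hf : Tendsto f (𝓝 0) (𝓝 y)) :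
    Tendsto g (𝓝 0) (𝓝 y) := by
  have hpow : Tendsto (fun x : E => ‖x‖ ^ (n + 1)) (𝓝 0) (𝓝 0) := by
    simpa using (tendsto_norm_zero (E := E)).pow (n + 1)
  have hsub : Tendsto (fun x => f x - g x) (𝓝 0) (𝓝 0) := IsBigO.trans_tendsto hfg hpow
  simpa using hf.sub hsub

theorem comp_right {u : D → E} (hfg : AgreeToOrder n f g) (hu : u =O[𝓝 0] fun x => ‖x‖) :
    AgreeToOrder n (f ∘ u) (g ∘ u) :=
  (IsBigO.comp_tendsto hfg (hu.trans_tendsto tendsto_norm_zero)).trans (hu.norm_left.pow (n + 1))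

theorem mul_left {R : Type*} [NormedRing R] {f g u : E → R} (hfg : AgreeToOrder n f g)
    (hu : u =O[𝓝 0] fun x => ‖x‖ ^ m) : AgreeToOrder (m + n) (u * f) (u * g) := by
  simpa only [AgreeToOrder, Pi.mul_apply, mul_sub, pow_add, mul_assoc] using hu.mul hfg

end AgreeToOrder

theorem agreeToOrder_inverse_one_sub {A : Type*} [NormedRing A] [HasSummableGeomSeries A]
    {u : E → A} (hu : u =O[𝓝 0] fun x => ‖x‖) (n : ℕ) :
    AgreeToOrder n (fun x => Ring.inverse (1 - u x))
      fun x => ∑ k ∈ Finset.range (n + 1), u x ^ k := by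
  have hu0 : Tendsto u (𝓝 0) (𝓝 0) := hu.trans_tendsto tendsto_norm_zero
  have hinv : (fun x => Ring.inverse (1 - u x)) =O[𝓝 0] fun _ => (1 : ℝ) :=
    (NormedRing.inverse_one_sub_norm (R := A)).comp_tendsto hu0
  have hrem : (fun x => u x ^ (n + 1) * Ring.inverse (1 - u x)) =O[𝓝 0] fun x => ‖x‖ ^ (n + 1) := by
    simpa only [mul_one] using (hu.pow (n + 1)).mul hinv
  refine hrem.congr' ?_ .rfl
  filter_upwards [hu0.eventually (NormedRing.inverse_one_sub_nth_order (n + 1))] with x hx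
  rw [eq_sub_iff_add_eq', ← hx]

end AgreeToOrder

section Analytic

variable {𝕜 D E F : Type*} [NontriviallyNormedField 𝕜] [NormedAddCommGroup D]
  [NormedAddCommGroup E] [NormedSpace 𝕜 E] [NormedAddCommGroup F] [NormedSpace 𝕜 F] {n : ℕ}

theorem AgreeToOrder.comp_left {u v : D → E} (huv : AgreeToOrder n u v) {f : E → F}
    {f' : E →L[𝕜] F} {y : E} (hf : HasStrictFDerivAt f f' y) (hu : Tendsto u (𝓝 0) (𝓝 y)) :
    AgreeToOrder n (f ∘ u) (f ∘ v) :=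
  (hf.isBigO_sub.comp_tendsto (hu.prodMk_nhds (huv.tendsto hu))).trans huv

theorem AgreeToOrder.apply_diag_eq {f g : E → F} {p q : FormalMultilinearSeries 𝕜 E F}
    (hfg : AgreeToOrder n f g) (hf : HasFPowerSeriesAt f p 0) (hg : HasFPowerSeriesAt g q 0)
    (y : E) : p n (fun _ => y) = q n (fun _ => y) := by
  induction n using Nat.strong_induction_on generalizing y with
  | _ n ih =>
    have htaylor := (hf.sub hg).isBigO_sub_partialSum_pow (n + 1)
    have hpartialSum : ∀ z, (p - q).partialSum (n + 1) z = (p n - q n) fun _ => z := fun z => by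
      rw [FormalMultilinearSeries.partialSum, Finset.sum_range_succ,
        Finset.sum_eq_zero fun i hi => ?_, zero_add]
      · rfl
      · have hi : i < n := Finset.mem_range.1 hi
        exact sub_eq_zero.2 (ih i hi (hfg.of_le hi.le) z)
    have hterm : (fun z => (p n - q n) fun _ => z) =O[𝓝 0] fun z => ‖z‖ ^ (n + 1) := by
      refine (IsBigO.sub hfg htaylor).congr_left fun z => ?_
      rw [hpartialSum, zero_add, Pi.sub_apply, sub_sub_cancel]
    exact sub_eq_zero.1 (hterm.continuousMultilinearMap_apply_eq_zero y)

end Analytic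

theorem AgreeToOrder.powerSeriesCoeff_apply_diag_eq {B : Type*} [NormedRing B] [NormedAlgebra ℂ B]
    [CompleteSpace B] {F G : B → B} {n : ℕ} (hFG : AgreeToOrder n F G) (hF : AnalyticAt ℂ F 0)
    (hG : AnalyticAt ℂ G 0) (b : B) :
    powerSeriesCoeff F n (fun _ => b) = powerSeriesCoeff G n (fun _ => b) := by
  obtain ⟨p, r, hp⟩ := hF
  obtain ⟨q, s, hq⟩ := hG
  simp only [powerSeriesCoeff, smul_apply]
  rw [← hp.factorial_smul b n, ← hq.factorial_smul b n,
    hFG.apply_diag_eq hp.hasFPowerSeriesAt hq.hasFPowerSeriesAt b]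

namespace BanachNCPS

section LocalInverse

variable {B : Type*} [NormedRing B] [NormedAlgebra ℂ B] {F F' G G' : B → B} {n : ℕ}

theorem IsLocalInverse.isBigO_norm (hG : IsLocalInverse F G) : G =O[𝓝 0] fun b => ‖b‖ := by
  simpa [hG.map_zero] using hG.analyticAt.differentiableAt.isBigO_sub.norm_right

theorem IsLocalInverse.tendsto (hG : IsLocalInverse F G) : Tendsto G (𝓝 0) (𝓝 0) :=
  hG.isBigO_norm.trans_tendsto tendsto_norm_zero

theorem IsLocalInverse.agreeToOrder (hG : IsLocalInverse F G) (hG' : IsLocalInverse F' G')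
    (hF : AgreeToOrder n F F') : AgreeToOrder n G G' := by
  -- The claim is this agreement of `F' ∘ G' = id` with `F ∘ G'`, after applying `G`.
  have hid : AgreeToOrder n id (F ∘ G') :=
    (hF.comp_right hG'.isBigO_norm).symm.congr hG'.right_inv .rfl
  exact (hid.comp_left hG.analyticAt.hasStrictFDerivAt tendsto_id).congr .rfl
    (hG'.tendsto.eventually hG.left_inv)

end LocalInverse

variable {B A A' : Type*} [NormedRing B] [NormedAlgebra ℂ B] [NormedRing A] [NormedAlgebra ℂ A]
  [NormedRing A'] [NormedAlgebra ℂ A'] {P : BanachNCPS B A} {P' : BanachNCPS B A'} {a : A} {a' : A'}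
  {n : ℕ}

theorem moment_cons_one (P : BanachNCPS B A) (a : A) (k : ℕ) (b : B) :
    P.moment a (k + 1) (Fin.cons 1 fun _ => b) = P.E (a * (P.ι b * a) ^ k) := by
  simp [moment, List.ofFn_succ, List.ofFn_const, List.prod_replicate]

theorem ι_mul_isBigO_norm (P : BanachNCPS B A) (a : A) :
    (fun b => P.ι b * a) =O[𝓝 0] fun b => ‖b‖ := by
  have hdiff : DifferentiableAt ℂ (fun b => P.ι b * a) 0 :=
    (P.analyticAt_ι 0).differentiableAt.mul_const a
  simpa using hdiff.isBigO_sub.norm_right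

theorem agreeToOrder_Phi_sum_moment [CompleteSpace A] (P : BanachNCPS B A) (a : A) (n : ℕ) :
    AgreeToOrder n (P.Phi a) fun b =>
      ∑ k ∈ Finset.range (n + 1), P.moment a (k + 1) (Fin.cons 1 fun _ => b) := by
  have hneumann := (agreeToOrder_inverse_one_sub (P.ι_mul_isBigO_norm a) n).comp_left
    (P.E ∘L ContinuousLinearMap.mul ℂ A a).hasStrictFDerivAt
    (P.analyticAt_inverse_one_sub a).continuousAt.tendsto
  refine hneumann.congr .rfl (.of_forall fun b => ?_)
  simp [moment_cons_one]

theorem agreeToOrder_Phi [CompleteSpace A] [CompleteSpace A']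
    (hmom : ∀ k ≤ n, ∀ b : B, P.moment a (k + 1) (Fin.cons 1 fun _ => b) =
      P'.moment a' (k + 1) (Fin.cons 1 fun _ => b)) :
    AgreeToOrder n (P.Phi a) (P'.Phi a') := by
  have hsum := (P'.agreeToOrder_Phi_sum_moment a' n).symm
  refine (P.agreeToOrder_Phi_sum_moment a n).trans (hsum.congr (.of_forall fun b => ?_) .rfl)
  exact Finset.sum_congr rfl fun k hk => (hmom k (Finset.mem_range_succ_iff.1 hk) b).symm

theorem agreeToOrder_Psi [CompleteSpace A] [CompleteSpace A']
    (hPhi : AgreeToOrder n (P.Phi a) (P'.Phi a')) :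
    AgreeToOrder (n + 1) (P.Psi a) (P'.Psi a') := by
  have hid : (fun b : B => b) =O[𝓝 0] fun b => ‖b‖ ^ 1 := by
    simpa only [pow_one] using (isBigO_refl (fun b : B => b) (𝓝 0)).norm_right
  rw [add_comm n]
  exact (hPhi.mul_left hid).congr (EventuallyEq.symm (P.Psi_eq_mul_Phi a))
    (EventuallyEq.symm (P'.Psi_eq_mul_Phi a'))

variable [CompleteSpace A] [CompleteSpace A'] [CompleteSpace B]

theorem tendsto_Phi_PsiInv (P : BanachNCPS B A) (a : A) (ha : IsUnit (P.E a)) :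
    Tendsto (P.Phi a ∘ P.PsiInv a ha) (𝓝 0) (𝓝 (P.E a)) := by
  rw [← P.Phi_zero a]
  exact (P.analyticAt_Phi a).continuousAt.tendsto.comp (P.isLocalInverse_PsiInv a ha).tendsto

theorem H_eventuallyEq_inverse_Phi_PsiInv (P : BanachNCPS B A) (a : A) (ha : IsUnit (P.E a)) :
    P.H a ha =ᶠ[𝓝 0] Ring.inverse ∘ P.Phi a ∘ P.PsiInv a ha := by
  have hG := P.isLocalInverse_PsiInv a ha
  have hPhi : AnalyticAt ℂ (P.Phi a ∘ P.PsiInv a ha) 0 :=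
    (P.analyticAt_Phi a).comp_of_eq hG.analyticAt hG.map_zero
  have hinv : AnalyticAt ℂ (Ring.inverse ∘ P.Phi a ∘ P.PsiInv a ha) 0 :=
    (analyticOnNhd_inverse (P.E a) ha).comp_of_eq hPhi
      (by rw [Function.comp_apply, hG.map_zero, P.Phi_zero])
  refine H_unique (P.H_spec a ha).1 hinv ?_
  filter_upwards [(P.H_spec a ha).2, hG.right_inv, hG.tendsto.eventually (P.Psi_eq_mul_Phi a),
    (P.tendsto_Phi_PsiInv a ha).eventually (Units.isOpen.mem_nhds ha)] with b hH hright hPsi hunit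
  calc b * P.H a ha b
      = P.PsiInv a ha b := hH.symm
    _ = P.PsiInv a ha b * P.Phi a (P.PsiInv a ha b) *
          Ring.inverse (P.Phi a (P.PsiInv a ha b)) := by
        rw [mul_assoc, Ring.mul_inverse_cancel (P.Phi a (P.PsiInv a ha b)) hunit, mul_one]
    _ = b * Ring.inverse (P.Phi a (P.PsiInv a ha b)) := by rw [← hPsi, hright]

theorem agreeToOrder_H (ha : IsUnit (P.E a)) (ha' : IsUnit (P'.E a'))
    (hPhi : AgreeToOrder n (P.Phi a) (P'.Phi a')) :
    AgreeToOrder n (P.H a ha) (P'.H a' ha') := by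
  have hG := P.isLocalInverse_PsiInv a ha
  have hG' := P'.isLocalInverse_PsiInv a' ha'
  have hPsiInv : AgreeToOrder n (P.PsiInv a ha) (P'.PsiInv a' ha') :=
    (hG.agreeToOrder hG' (agreeToOrder_Psi hPhi)).of_le n.le_succ
  have hcomp : AgreeToOrder n (P.Phi a ∘ P.PsiInv a ha) (P'.Phi a' ∘ P'.PsiInv a' ha') :=
    (hPsiInv.comp_left (P.analyticAt_Phi a).hasStrictFDerivAt hG.tendsto).trans
      (hPhi.comp_right hG'.isBigO_norm)
  exact (hcomp.comp_left (analyticOnNhd_inverse (𝕜 := ℂ) _ ha).hasStrictFDerivAt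
    (P.tendsto_Phi_PsiInv a ha)).congr (P.H_eventuallyEq_inverse_Phi_PsiInv a ha).symm
      (P'.H_eventuallyEq_inverse_Phi_PsiInv a' ha').symm

theorem agreeToOrder_STransform (ha : IsUnit (P.E a)) (ha' : IsUnit (P'.E a'))
    (hPhi : AgreeToOrder n (P.Phi a) (P'.Phi a')) :
    AgreeToOrder n (P.STransform a ha) (P'.STransform a' ha') := by
  have hbdd : (fun b : B => 1 + b) =O[𝓝 0] fun b => ‖b‖ ^ 0 := by
    simpa only [pow_zero] using ((continuous_const_add (1 : B)).tendsto 0).isBigO_one ℝ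
  have hmul := (agreeToOrder_H ha ha' hPhi).mul_left hbdd
  rwa [zero_add] at hmul

end BanachNCPS

theorem stmt_6_general {B A A' : Type*}
    [NormedRing B] [NormedAlgebra ℂ B] [CompleteSpace B]
    [NormedRing A] [NormedAlgebra ℂ A] [CompleteSpace A]
    [NormedRing A'] [NormedAlgebra ℂ A'] [CompleteSpace A']
    (P : BanachNCPS B A) (P' : BanachNCPS B A') (a : A) (a' : A')
    (ha : IsUnit (P.E a)) (ha' : IsUnit (P'.E a')) (n : ℕ)
    (hmom : ∀ k ≤ n, ∀ b : B, P.moment a (k + 1) (Fin.cons 1 fun _ => b) =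
      P'.moment a' (k + 1) (Fin.cons 1 fun _ => b)) :
    ∀ b : B, powerSeriesCoeff (P.STransform a ha) n (fun _ => b) =
      powerSeriesCoeff (P'.STransform a' ha') n (fun _ => b) :=
  have hPhi : AgreeToOrder n (P.Phi a) (P'.Phi a') := BanachNCPS.agreeToOrder_Phi hmom
  (BanachNCPS.agreeToOrder_STransform ha ha' hPhi).powerSeriesCoeff_apply_diag_eq
    (P.analyticAt_STransform a ha) (P'.analyticAt_STransform a' ha')

/-- The `n`-th term of the power series expansion about `0` of the S-transform depends only on the
first `n + 1` moment functions. -/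
theorem stmt_6 {B A A' : Type*}
    [NormedRing B] [NormedAlgebra ℂ B] [CompleteSpace B]
    [NormedRing A] [NormedAlgebra ℂ A] [CompleteSpace A]
    [NormedRing A'] [NormedAlgebra ℂ A'] [CompleteSpace A']
    (P : BanachNCPS B A) (P' : BanachNCPS B A') (a : A) (a' : A')
    (ha : IsUnit (P.E a)) (ha' : IsUnit (P'.E a')) (n : ℕ)
    (hmom : ∀ k : ℕ, 1 ≤ k → k ≤ n + 1 → P.moment a k = P'.moment a' k) :
    ∀ b : B, powerSeriesCoeff (P.STransform a ha) n (fun _ => b) =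
      powerSeriesCoeff (P'.STransform a' ha') n (fun _ => b) :=
  stmt_6_general P P' a a' ha ha' n fun k hk _ =>
    congrFun (hmom (k + 1) k.succ_pos (Nat.succ_le_succ hk)) _
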